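/- Let n ≥ 1 be an integer. If α = β > −1/2, then for 0 ≤ k ≤ n one has d_{k,n} > 0 when n − k is even and d_{k,n} = 0 when n − k is odd. If α = β = −1/2, then d_{n,n} > 0 and d_{k,n} = 0 for all 1 ≤ k ≤ n − 1. -/

import Mathlib

open Finset

/-- Pochhammer symbol `(a)_j = a (a+1) ⋯ (a+j-1)`. -/
noncomputable def poch (a : ℝ) (j : ℕ) : ℝ := ∏ i ∈ Finset.range j, (a + i)

/-- Generalized binomial coefficient `binom(a, m) = a (a-1) ⋯ (a-m+1) / m!`. -/
noncomputable def gbinom (a : ℝ) (m : ℕ) : ℝ :=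
  (∏ i ∈ Finset.range m, (a - i)) / (Nat.factorial m)

/-- Jacobi polynomial `P_n^{(α,β)}(x)` of a real variable. -/
noncomputable def jacobiP (α β : ℝ) (n : ℕ) (x : ℝ) : ℝ :=
  (1 / 2 ^ n) * ∑ k ∈ Finset.range (n + 1),
    gbinom ((n : ℝ) + α) (n - k) * gbinom ((n : ℝ) + β) k * (x - 1) ^ k * (x + 1) ^ (n - k)

/-- Jacobi polynomial `P_n^{(α,β)}(z)` of a complex variable. -/
noncomputable def jacobiC (α β : ℝ) (n : ℕ) (z : ℂ) : ℂ :=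
  (1 / 2 ^ n) * ∑ k ∈ Finset.range (n + 1),
    ((gbinom ((n : ℝ) + α) (n - k) * gbinom ((n : ℝ) + β) k : ℝ) : ℂ) *
      (z - 1) ^ k * (z + 1) ^ (n - k)

/-- Chebyshev-connection coefficients `d_{k,n}`, given by a terminating ₃F₂ sum. -/
noncomputable def dCoeff (α β : ℝ) (n k : ℕ) : ℝ :=
  (poch ((n : ℝ) + α + β + 1) k * poch ((k : ℝ) + α + 1) (n - k)) /
      ((Nat.factorial (n - k)) * 2 ^ (2 * k) * (Nat.factorial k)) *
    ∑ j ∈ Finset.range (n - k + 1),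
      (poch ((k : ℝ) - n) j * poch ((n : ℝ) + k + α + β + 1) j * poch ((k : ℝ) + 1 / 2) j) /
        (poch ((k : ℝ) + α + 1) j * poch (2 * (k : ℝ) + 1) j * (Nat.factorial j))

/-- The Bernstein ellipse `E_ρ`: the set of points `z = (u + u⁻¹)/2` with `|u| = ρ`. -/
def bernsteinEllipse (ρ : ℝ) : Set ℂ :=
  {z : ℂ | ∃ u : ℂ, ‖u‖ = ρ ∧ z = (u + u⁻¹) / 2}

/-!
For `α = β` the sum in `d_{k,n}` is, with `a = k + α + 1`, `c = k + 1/2` and `m = n - k`, the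
terminating Watson series `₃F₂(-m, m + 2a - 1, c; a, 2c; 1)`. Zeilberger's algorithm gives a
two-step recurrence in `m`, whose solution vanishes for odd `m` and equals
`(1/2)_p (a - c)_p / ((a)_p (c + 1/2)_p)` for `m = 2p`. The prefactor of `d_{k,n}` is positive and
`a - c = α + 1/2`, so for even `n - k` the sign of `d_{k,n}` is that of `(α + 1/2)_p`.
-/

theorem poch_zero (a : ℝ) : poch a 0 = 1 :=
  prod_range_zero _

theorem poch_succ (a : ℝ) (j : ℕ) : poch a (j + 1) = poch a j * (a + j) :=
  prod_range_succ _ _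

theorem poch_succ_left (a : ℝ) (j : ℕ) : poch a (j + 1) = a * poch (a + 1) j := by
  simp only [poch, prod_range_succ', Nat.cast_add, Nat.cast_one, Nat.cast_zero, add_zero,
    add_assoc, add_comm (1 : ℝ), mul_comm]

theorem poch_pos {a : ℝ} (ha : 0 < a) (j : ℕ) : 0 < poch a j :=
  prod_pos fun i _ => by positivity

theorem poch_neg_natCast_eq_zero {m j : ℕ} (h : m < j) : poch (-(m : ℝ)) j = 0 :=
  prod_eq_zero (mem_range.mpr h) (neg_add_cancel _)

theorem sign_poch_succ {a : ℝ} (ha : -1 < a) (j : ℕ) :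
    SignType.sign (poch a (j + 1)) = SignType.sign a := by
  rw [poch_succ_left, sign_mul, sign_pos (poch_pos (by linarith) j), mul_one]

/-- The `j`-th term of the terminating Watson series `₃F₂(-m, m + 2a - 1, c; a, 2c; 1)`. -/
noncomputable def watsonTerm (a c : ℝ) (m j : ℕ) : ℝ :=
  (poch (-(m : ℝ)) j * poch (m + 2 * a - 1) j * poch c j) /
    (poch a j * poch (2 * c) j * Nat.factorial j)

/-- The terminating Watson series `₃F₂(-m, m + 2a - 1, c; a, 2c; 1)`, to which the sum in `dCoeff`
specializes when `α = β`. -/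
noncomputable def watsonSum (a c : ℝ) (m : ℕ) : ℝ :=
  ∑ j ∈ range (m + 1), watsonTerm a c m j

/-- The Zeilberger certificate of the Watson series: `2 (2m + 2a + 1)` times it is the partial sum
up to index `j` of the combination of `watsonTerm a c (m + 2)` and `watsonTerm a c m` occurring in
the recurrence for `watsonSum`. -/
noncomputable def watsonCert (a c : ℝ) (m j : ℕ) : ℝ :=
  (poch (-((m : ℝ) + 1)) j * poch (m + 2 * a) j * poch c (j + 1)) /
    (poch a j * poch (2 * c) j * Nat.factorial j)

section Watson

variable {a c : ℝ}

theorem watsonTerm_zero (a c : ℝ) (m : ℕ) : watsonTerm a c m 0 = 1 := by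
  simp [watsonTerm, poch_zero]

theorem watsonCert_zero (a c : ℝ) (m : ℕ) : watsonCert a c m 0 = c := by
  simp [watsonCert, poch_zero, poch_succ]

theorem sum_range_watsonTerm {m N : ℕ} (h : m < N) :
    ∑ j ∈ range N, watsonTerm a c m j = watsonSum a c m := by
  refine (sum_subset (range_subset_range.mpr h) fun j _ hj => ?_).symm
  have hmj : m < j := by simpa using hj
  rw [watsonTerm, poch_neg_natCast_eq_zero hmj, zero_mul, zero_mul, zero_div]

theorem watsonCert_eq_zero {m j : ℕ} (h : m + 1 < j) : watsonCert a c m j = 0 := by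
  rw [watsonCert, ← Nat.cast_succ, poch_neg_natCast_eq_zero h, zero_mul, zero_mul, zero_div]

theorem watsonCert_succ (a c : ℝ) (m j : ℕ) :
    watsonCert a c m (j + 1) = watsonCert a c m j *
      ((j - m - 1) * (m + 2 * a + j) * (c + j + 1) / ((a + j) * (2 * c + j) * (j + 1))) := by
  rw [watsonCert, watsonCert, div_mul_div_comm, poch_succ c (j + 1)]
  simp only [poch_succ _ j, Nat.factorial_succ]
  push_cast
  congr 1 <;> ring

theorem watsonTerm_add_two_succ (a c : ℝ) (m j : ℕ) :
    (m + 2 * a) * watsonTerm a c (m + 2) (j + 1) = watsonCert a c m j *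
      (-(m + 2) * (m + 2 * a + j) * (m + 2 * a + j + 1) / ((a + j) * (2 * c + j) * (j + 1))) := by
  have h_neg : poch (-((m + 2 : ℕ) : ℝ)) (j + 1) = -(m + 2) * poch (-((m : ℝ) + 1)) j := by
    rw [poch_succ_left]
    push_cast
    ring_nf
  have h_pos : (m + 2 * a) * poch ((m + 2 : ℕ) + 2 * a - 1) (j + 1) =
      poch (m + 2 * a) j * ((m + 2 * a + j) * (m + 2 * a + j + 1)) := by
    have h_left := poch_succ_left (m + 2 * a) (j + 1)
    rw [poch_succ, poch_succ] at h_left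
    push_cast at h_left ⊢
    rw [show (m : ℝ) + 2 + 2 * a - 1 = m + 2 * a + 1 by ring, ← h_left]
    ring
  rw [watsonTerm, watsonCert, div_mul_div_comm, mul_div_assoc', h_neg]
  congr 1
  · linear_combination -(m + 2) * poch (-((m : ℝ) + 1)) j * poch c (j + 1) * h_pos
  · simp only [poch_succ, Nat.factorial_succ]
    push_cast
    ring

theorem watsonTerm_succ (a c : ℝ) (m j : ℕ) :
    (m + 1) * watsonTerm a c m (j + 1) = watsonCert a c m j *
      (-(j - m - 1) * (j - m) * (m + 2 * a - 1) / ((a + j) * (2 * c + j) * (j + 1))) := by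
  have h_neg : (m + 1) * poch (-(m : ℝ)) (j + 1) =
      -poch (-((m : ℝ) + 1)) j * ((j - m - 1) * (j - m)) := by
    have h_left := poch_succ_left (-((m : ℝ) + 1)) (j + 1)
    rw [poch_succ, poch_succ, show -((m : ℝ) + 1) + 1 = -m by ring] at h_left
    push_cast at h_left
    linear_combination h_left
  have h_pos : poch (m + 2 * a - 1) (j + 1) = (m + 2 * a - 1) * poch (m + 2 * a) j := by
    rw [poch_succ_left, sub_add_cancel]
  rw [watsonTerm, watsonCert, div_mul_div_comm, mul_div_assoc', h_pos]
  congr 1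
  · linear_combination (m + 2 * a - 1) * poch (m + 2 * a) j * poch c (j + 1) * h_neg
  · simp only [poch_succ, Nat.factorial_succ]
    push_cast
    ring

theorem sum_range_succ_watsonTerm_recurrence (ha : ∀ i : ℕ, a + i ≠ 0)
    (hc : ∀ i : ℕ, 2 * c + i ≠ 0) (m N : ℕ) :
    ∑ j ∈ range (N + 1), ((m + 2 * a) * (m + 1 + 2 * c) * watsonTerm a c (m + 2) j
      - (m + 1) * (m + 2 * a - 2 * c) * watsonTerm a c m j) =
    2 * (2 * m + 2 * a + 1) * watsonCert a c m N := by
  induction N with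
  | zero =>
    rw [sum_range_one, watsonTerm_zero, watsonTerm_zero, watsonCert_zero]
    ring
  | succ N ih =>
    have h_a := ha N
    have h_c := hc N
    have h_N : (N : ℝ) + 1 ≠ 0 := by positivity
    rw [sum_range_succ, ih, mul_right_comm (m + 2 * a), watsonTerm_add_two_succ,
      mul_right_comm ((m : ℝ) + 1), watsonTerm_succ, watsonCert_succ]
    field_simp
    ring

theorem watsonSum_add_two (ha : ∀ i : ℕ, a + i ≠ 0) (hc : ∀ i : ℕ, 2 * c + i ≠ 0) (m : ℕ) :
    (m + 2 * a) * (m + 1 + 2 * c) * watsonSum a c (m + 2) =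
      (m + 1) * (m + 2 * a - 2 * c) * watsonSum a c m := by
  have h_sum := sum_range_succ_watsonTerm_recurrence ha hc m (m + 2)
  rw [watsonCert_eq_zero (by lia), mul_zero, sum_sub_distrib, ← mul_sum, ← mul_sum,
    sum_range_watsonTerm (by lia), sum_range_watsonTerm (by lia)] at h_sum
  exact sub_eq_zero.mp h_sum

theorem watsonSum_zero (a c : ℝ) : watsonSum a c 0 = 1 := by
  rw [watsonSum, sum_range_one, watsonTerm_zero]

theorem watsonSum_one (ha : a ≠ 0) (hc : c ≠ 0) : watsonSum a c 1 = 0 := by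
  have h_one : watsonTerm a c 1 1 = -1 := by
    simp only [watsonTerm, poch, prod_range_one, Nat.cast_zero, Nat.cast_one, Nat.factorial_one,
      add_zero, add_sub_cancel_left]
    field_simp
  rw [watsonSum, sum_range_succ, sum_range_one, watsonTerm_zero, h_one, add_neg_cancel]

theorem watsonSum_odd (ha : ∀ i : ℕ, 2 * a + i ≠ 0) (hc : ∀ i : ℕ, 2 * c + i ≠ 0) (p : ℕ) :
    watsonSum a c (2 * p + 1) = 0 := by
  have ha' (i : ℕ) : a + i ≠ 0 := fun h => ha (2 * i) (by push_cast; linear_combination 2 * h)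
  induction p with
  | zero => exact watsonSum_one (by simpa using ha' 0) (by simpa using hc 0)
  | succ p ih =>
    have h_rec := watsonSum_add_two ha' hc (2 * p + 1)
    rw [ih, mul_zero] at h_rec
    refine (mul_eq_zero.mp h_rec).resolve_left (mul_ne_zero ?_ ?_)
    · rw [add_comm]
      exact ha _
    · rw [add_comm]
      exact_mod_cast hc (2 * p + 1 + 1)

theorem watsonSum_even (ha : ∀ i : ℕ, a + i ≠ 0) (hc : ∀ i : ℕ, 2 * c + i ≠ 0) (p : ℕ) :
    watsonSum a c (2 * p) = poch (1 / 2) p * poch (a - c) p / (poch a p * poch (c + 1 / 2) p) := by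
  induction p with
  | zero => simp [watsonSum_zero, poch_zero]
  | succ p ih =>
    have h_rec := watsonSum_add_two ha hc (2 * p)
    have h_c : c + 1 / 2 + p ≠ 0 := fun h => hc (2 * p + 1) (by push_cast; linear_combination 2 * h)
    push_cast at h_rec
    rw [ih] at h_rec
    rw [mul_add_one, poch_succ, poch_succ, poch_succ, poch_succ, mul_mul_mul_comm,
      mul_mul_mul_comm (poch a p), ← div_mul_div_comm, mul_div_assoc',
      eq_div_iff (mul_ne_zero (ha p) h_c)]
    linear_combination h_rec / 4

theorem sign_watsonSum_even_succ (ha : 0 < a) (hc : 0 < c) (hca : c - 1 < a) (p : ℕ) :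
    SignType.sign (watsonSum a c (2 * (p + 1))) = SignType.sign (a - c) := by
  rw [watsonSum_even (fun i => by positivity) (fun i => by positivity), mul_div_right_comm,
    sign_mul, sign_poch_succ (by linarith), sign_pos, one_mul]
  have h_half := poch_pos (one_half_pos (α := ℝ)) (p + 1)
  have h_a := poch_pos ha (p + 1)
  have h_c := poch_pos (add_pos hc one_half_pos) (p + 1)
  positivity

end Watson

section Gegenbauer

variable {α : ℝ} {n k : ℕ}

theorem exists_pos_dCoeff_eq_mul_watsonSum (hα : -1 < α) (hk : k ≤ n) :
    ∃ C > 0, dCoeff α α n k = C * watsonSum (k + α + 1) (k + 1 / 2) (n - k) := by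
  have h_first : 0 < poch (n + α + α + 1) k := by
    rcases k.eq_zero_or_pos with rfl | hk_pos
    · simp [poch_zero]
    · have hn : (1 : ℝ) ≤ n := by exact_mod_cast hk_pos.trans_le hk
      exact poch_pos (by linarith) k
  have h_second : 0 < poch (k + α + 1) (n - k) :=
    poch_pos (by linarith [k.cast_nonneg (α := ℝ)]) (n - k)
  refine ⟨poch (n + α + α + 1) k * poch (k + α + 1) (n - k) /
    (Nat.factorial (n - k) * 2 ^ (2 * k) * Nat.factorial k), by positivity, ?_⟩
  simp only [dCoeff, watsonSum, watsonTerm, Nat.cast_sub hk]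
  ring_nf

theorem dCoeff_self_pos (hα : -1 < α) (n : ℕ) : 0 < dCoeff α α n n := by
  obtain ⟨C, hC, h_eq⟩ := exists_pos_dCoeff_eq_mul_watsonSum hα (le_refl n)
  rwa [h_eq, Nat.sub_self, watsonSum_zero, mul_one]

theorem dCoeff_eq_zero_of_odd (hα : -1 < α) (hk : k ≤ n) (h_odd : Odd (n - k)) :
    dCoeff α α n k = 0 := by
  obtain ⟨C, -, h_eq⟩ := exists_pos_dCoeff_eq_mul_watsonSum hα hk
  obtain ⟨p, hp⟩ := h_odd
  have h_a_pos : 0 < (k : ℝ) + α + 1 := by linarith [k.cast_nonneg (α := ℝ)]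
  rw [h_eq, hp, watsonSum_odd (fun i => by positivity) (fun i => by positivity), mul_zero]

theorem sign_dCoeff_of_even (hα : -1 < α) (hk : k < n) (h_even : Even (n - k)) :
    SignType.sign (dCoeff α α n k) = SignType.sign (α + 1 / 2) := by
  obtain ⟨C, hC, h_eq⟩ := exists_pos_dCoeff_eq_mul_watsonSum hα hk.le
  obtain ⟨p, hp⟩ : ∃ p, n - k = 2 * (p + 1) := by
    obtain ⟨q, hq⟩ := h_even
    exact ⟨q - 1, by lia⟩
  have h_a_pos : 0 < (k : ℝ) + α + 1 := by linarith [k.cast_nonneg (α := ℝ)]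
  rw [h_eq, sign_mul, sign_pos hC, one_mul, hp,
    sign_watsonSum_even_succ h_a_pos (by positivity) (by linarith)]
  ring_nf

end Gegenbauer

theorem dCoeff_gegenbauer_sign_general (n : ℕ) (α : ℝ) :
    (-1/2 < α → ∀ k : ℕ, k ≤ n →
      (Even (n - k) → 0 < dCoeff α α n k) ∧ (Odd (n - k) → dCoeff α α n k = 0)) ∧
    (α = -1/2 → 0 < dCoeff α α n n ∧ ∀ k : ℕ, k < n → dCoeff α α n k = 0) ∧
    (-1 < α → α < -1/2 → 0 < dCoeff α α n n ∧ ∀ k : ℕ, k < n →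
      (Even (n - k) → dCoeff α α n k < 0) ∧ (Odd (n - k) → dCoeff α α n k = 0)) := by
  refine ⟨fun hα k hk => ?_, fun hα => ?_, fun hα hα_lt => ?_⟩
  · have hα' : -1 < α := by linarith
    refine ⟨fun h_even => ?_, dCoeff_eq_zero_of_odd hα' hk⟩
    rcases hk.eq_or_lt with rfl | hk
    · exact dCoeff_self_pos hα' k
    · rw [← sign_eq_one_iff, sign_dCoeff_of_even hα' hk h_even]
      exact sign_pos (by linarith)
  · have hα' : -1 < α := by linarith
    refine ⟨dCoeff_self_pos hα' n, fun k hk => ?_⟩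
    rcases Nat.even_or_odd (n - k) with h_even | h_odd
    · rw [← sign_eq_zero_iff, sign_dCoeff_of_even hα' hk h_even, sign_eq_zero_iff]
      linarith
    · exact dCoeff_eq_zero_of_odd hα' hk.le h_odd
  · refine ⟨dCoeff_self_pos hα n, fun k hk => ⟨fun h_even => ?_, dCoeff_eq_zero_of_odd hα hk.le⟩⟩
    rw [← sign_eq_neg_one_iff, sign_dCoeff_of_even hα hk h_even]
    exact sign_neg (by linarith)

/-- signs of `d_{k,n}` in the ultraspherical case `α = β`. If `α > -1/2`, then
`d_{k,n} > 0` when `n - k` is even and `d_{k,n} = 0` when `n - k` is odd; if `α = -1/2`, then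
`d_{n,n} > 0` and `d_{k,n} = 0` for `1 ≤ k ≤ n - 1`. -/
theorem dCoeff_gegenbauer_sign (n : ℕ) (hn : 1 ≤ n) (α : ℝ) :
    (-1/2 < α → ∀ k : ℕ, k ≤ n →
      ((n - k) % 2 = 0 → 0 < dCoeff α α n k) ∧ ((n - k) % 2 = 1 → dCoeff α α n k = 0)) ∧
    (α = -1/2 →
      0 < dCoeff α α n n ∧ ∀ k : ℕ, 1 ≤ k → k ≤ n - 1 → dCoeff α α n k = 0) := by
  obtain ⟨h_gt, h_eq, -⟩ := dCoeff_gegenbauer_sign_general n α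
  simp only [Nat.even_iff, Nat.odd_iff] at h_gt
  exact ⟨h_gt, fun hα => ⟨(h_eq hα).1, fun k _ hk => (h_eq hα).2 k (by lia)⟩⟩
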